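/- For every matrix M ∈ ℝ^{k×m}, the squared Frobenius norm ‖Y − U·M‖_F² is at least one half of the number of indices i ∈ {1,…,n} for which there exists j ≠ y(i) with (U·M)_{i,j} ≥ (U·M)_{i,y(i)}. Consequently, the least-squares residual min_{M∈ℝ^{k×m}} ‖Y − U·M‖_F² is at least one half of the minimal number of misclassified rows achievable by any linear classifier M (where row i is misclassified if some coordinate j ≠ y(i) of the i-th row of U·M is at least the coordinate y(i)). -/

import Mathlib

open scoped Classical

/-- The least-squares residual `‖Y − U·M‖_F²` upper-bounds half the number of rows
misclassified by the linear classifier `M`, and consequently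
`min_M ‖Y − U·M‖_F² ≥ (1/2)·min_M #misclassified`. -/
theorem residual_bounds_linear_probing_error
    (n k m : ℕ) (hn : 0 < n) (hk : 0 < k) (hm : 0 < m)
    (U : Matrix (Fin n) (Fin k) ℝ) (y : Fin n → Fin m)
    (Y : Matrix (Fin n) (Fin m) ℝ)
    (hY : ∀ i j, Y i j = if j = y i then 1 else 0) :
    (∀ M : Matrix (Fin k) (Fin m) ℝ,
      (((Finset.univ.filter fun i : Fin n =>
            ∃ j : Fin m, j ≠ y i ∧ (U * M) i (y i) ≤ (U * M) i j).card : ℝ)) / 2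
        ≤ ∑ i, ∑ j, (Y i j - (U * M) i j) ^ 2) ∧
    sInf {c : ℝ | ∃ M : Matrix (Fin k) (Fin m) ℝ,
          c = ((Finset.univ.filter fun i : Fin n =>
            ∃ j : Fin m, j ≠ y i ∧ (U * M) i (y i) ≤ (U * M) i j).card : ℝ)} / 2
      ≤ sInf {r : ℝ | ∃ M : Matrix (Fin k) (Fin m) ℝ,
          r = ∑ i, ∑ j, (Y i j - (U * M) i j) ^ 2} := by
  have key : ∀ M : Matrix (Fin k) (Fin m) ℝ,
      (((Finset.univ.filter fun i : Fin n =>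
            ∃ j : Fin m, j ≠ y i ∧ (U * M) i (y i) ≤ (U * M) i j).card : ℝ)) / 2
        ≤ ∑ i, ∑ j, (Y i j - (U * M) i j) ^ 2 := by
    intro M
    rw [Finset.card_filter]
    push_cast
    rw [Finset.sum_div]
    apply Finset.sum_le_sum
    intro i _
    split_ifs with h
    · obtain ⟨j, hj, hle⟩ := h
      have h1 : ∑ l ∈ ({y i, j} : Finset (Fin m)), (Y i l - (U * M) i l) ^ 2
          ≤ ∑ l, (Y i l - (U * M) i l) ^ 2 :=
        Finset.sum_le_sum_of_subset_of_nonneg (Finset.subset_univ _)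
          (fun _ _ _ => sq_nonneg _)
      rw [Finset.sum_pair hj.symm, hY i (y i), hY i j, if_pos rfl, if_neg hj] at h1
      nlinarith [sq_nonneg (1 - (U * M) i (y i) - (U * M) i j), sq_nonneg (1 - (U * M) i (y i) + (U * M) i j)]
    · rw [zero_div]
      exact Finset.sum_nonneg (fun _ _ => sq_nonneg _)
  refine ⟨key, ?_⟩
  apply le_csInf
  · exact ⟨_, 0, rfl⟩
  · rintro r ⟨M, rfl⟩
    refine le_trans ?_ (key M)
    apply div_le_div_of_nonneg_right _ (by norm_num : (0:ℝ) ≤ 2)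
    apply csInf_le
    · refine ⟨0, ?_⟩
      rintro c ⟨N, rfl⟩
      exact Nat.cast_nonneg _
    · exact ⟨M, rfl⟩
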